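/- (Handle-moving lemma.) Let P be a modular operad in sets and f: Ass → P a morphism of cyclic operads. Let M, N be tuples of distinct labels and a, b, c, d four further distinct labels. Let Ξ be any composition of contractions ξ_{e e'} whose indices e, e' run over entries of M and N (the same composition on both sides). Then Ξ ξ_{ac} ξ_{bd} f⟨a b c d M N⟩ = Ξ ξ_{ac} ξ_{bd} f⟨M a b c d N⟩. Informally: a 'handle' — four consecutive labels a, b, c, d with arcs a–c and b–d — can be moved anywhere on the circle. -/

import Mathlib

/-- A modular operad in the category of sets, presented with labels drawn
from `ℕ`: an element `x` has a finite set `legs x` of labels and a genus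
`gen x`.  Bijections act via functions `ℕ → ℕ` that are injective on the
legs, `comp a b` is the operadic composition `∘_{a,b}` and `xi a b` is
the contraction `ξ_{ab}`. -/
structure ModularOperad where
  El : Type
  legs : El → Finset ℕ
  gen : El → ℕ
  act : (ℕ → ℕ) → El → El
  comp : ℕ → ℕ → El → El → El
  xi : ℕ → ℕ → El → El
  -- book-keeping of legs and genus
  legs_act : ∀ (ρ : ℕ → ℕ) (x : El), Set.InjOn ρ (legs x : Set ℕ) →
    legs (act ρ x) = (legs x).image ρ
  gen_act : ∀ (ρ : ℕ → ℕ) (x : El), Set.InjOn ρ (legs x : Set ℕ) →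
    gen (act ρ x) = gen x
  legs_comp : ∀ (a b : ℕ) (x y : El), a ∈ legs x → b ∈ legs y →
    Disjoint (legs x) (legs y) →
    legs (comp a b x y) = (legs x).erase a ∪ (legs y).erase b
  gen_comp : ∀ (a b : ℕ) (x y : El), a ∈ legs x → b ∈ legs y →
    Disjoint (legs x) (legs y) →
    gen (comp a b x y) = gen x + gen y
  legs_xi : ∀ (a b : ℕ) (x : El), a ∈ legs x → b ∈ legs x → a ≠ b →
    legs (xi a b x) = ((legs x).erase a).erase b
  gen_xi : ∀ (a b : ℕ) (x : El), a ∈ legs x → b ∈ legs x → a ≠ b →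
    gen (xi a b x) = gen x + 1
  -- `ξ_{ab} = ξ_{ba}`
  xi_symm : ∀ (a b : ℕ) (x : El), xi a b x = xi b a x
  -- functoriality of the action (axiom 2)
  act_id : ∀ x : El, act id x = x
  act_congr : ∀ (ρ ρ' : ℕ → ℕ) (x : El), (∀ c ∈ legs x, ρ c = ρ' c) →
    act ρ x = act ρ' x
  act_act : ∀ (ρ σ : ℕ → ℕ) (x : El), Set.InjOn σ (legs x : Set ℕ) →
    Set.InjOn ρ (((legs x).image σ : Finset ℕ) : Set ℕ) →
    act (ρ ∘ σ) x = act ρ (act σ x)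
  -- axiom 1: symmetry of `∘`
  comp_symm : ∀ (a b : ℕ) (x y : El), a ∈ legs x → b ∈ legs y →
    Disjoint (legs x) (legs y) → comp a b x y = comp b a y x
  -- axiom 3: equivariance of `∘`
  act_comp : ∀ (ρ : ℕ → ℕ) (a b : ℕ) (x y : El), a ∈ legs x → b ∈ legs y →
    Disjoint (legs x) (legs y) →
    Set.InjOn ρ ((legs x ∪ legs y : Finset ℕ) : Set ℕ) →
    act ρ (comp a b x y) = comp (ρ a) (ρ b) (act ρ x) (act ρ y)
  -- axiom 4: equivariance of `ξ`
  act_xi : ∀ (ρ : ℕ → ℕ) (a b : ℕ) (x : El), a ∈ legs x → b ∈ legs x →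
    a ≠ b → Set.InjOn ρ (legs x : Set ℕ) →
    act ρ (xi a b x) = xi (ρ a) (ρ b) (act ρ x)
  -- axiom 5
  xi_xi : ∀ (a b c d : ℕ) (x : El), a ∈ legs x → b ∈ legs x → c ∈ legs x →
    d ∈ legs x → a ≠ b → c ≠ d → a ≠ c → a ≠ d → b ≠ c → b ≠ d →
    xi a b (xi c d x) = xi c d (xi a b x)
  -- axiom 6: `ξ_{ab}(x ∘_{c,d} y) = ξ_{cd}(x ∘_{a,b} y)`,
  -- `a, c` legs of `x` and `b, d` legs of `y`
  xi_comp_exchange : ∀ (a b c d : ℕ) (x y : El), a ∈ legs x → c ∈ legs x →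
    b ∈ legs y → d ∈ legs y → a ≠ c → b ≠ d → Disjoint (legs x) (legs y) →
    xi a b (comp c d x y) = xi c d (comp a b x y)
  -- axiom 7: `ξ_{cd}(x) ∘_{a,b} y = ξ_{cd}(x ∘_{a,b} y)`, `c, d` legs of `x`
  xi_comp_left : ∀ (a b c d : ℕ) (x y : El), a ∈ legs x → b ∈ legs y →
    c ∈ legs x → d ∈ legs x → c ≠ d → a ≠ c → a ≠ d →
    Disjoint (legs x) (legs y) →
    comp a b (xi c d x) y = xi c d (comp a b x y)
  -- axiom 8: associativity of `∘`
  comp_assoc : ∀ (a b c d : ℕ) (x y z : El), a ∈ legs x → b ∈ legs y →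
    c ∈ legs y → d ∈ legs z → b ≠ c →
    Disjoint (legs x) (legs y) → Disjoint (legs x) (legs z) →
    Disjoint (legs y) (legs z) →
    comp c d (comp a b x y) z = comp a b x (comp c d y z)

/-- A morphism of cyclic operads `f : Ass → P` into (the underlying cyclic
operad of) a modular operad `P`.  An element of `Ass(C)` is a cyclic order
on the nonempty finite set `C`, represented by a nonempty duplicate-free
list of labels, two lists representing the same element iff they are
rotations of each other (`f_rot`).  `f` lands in the genus `0` part of `P`,
commutes with the actions of bijections (`f_act`) and with the cyclic
operad composition `⟨X a⟩ ∘_{a,b} ⟨b Y⟩ = ⟨X Y⟩` (`f_comp`). -/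
structure AssMorphism (P : ModularOperad) where
  f : List ℕ → P.El
  legs_f : ∀ l : List ℕ, l ≠ [] → l.Nodup → P.legs (f l) = l.toFinset
  gen_f : ∀ l : List ℕ, l ≠ [] → l.Nodup → P.gen (f l) = 0
  f_rot : ∀ l l' : List ℕ, l ≠ [] → l.Nodup → l ~r l' → f l = f l'
  f_act : ∀ (ρ : ℕ → ℕ) (l : List ℕ), l ≠ [] → l.Nodup →
    Set.InjOn ρ (l.toFinset : Set ℕ) → f (l.map ρ) = P.act ρ (f l)
  f_comp : ∀ (X Y : List ℕ) (a b : ℕ), (X ++ a :: b :: Y).Nodup →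
    X ++ Y ≠ [] →
    P.comp a b (f (X ++ [a])) (f (b :: Y)) = f (X ++ Y)

/-- A morphism of modular operads. -/
structure ModularHom (Q P : ModularOperad) where
  toFun : Q.El → P.El
  legs_map : ∀ x, P.legs (toFun x) = Q.legs x
  gen_map : ∀ x, P.gen (toFun x) = Q.gen x
  map_act : ∀ (ρ : ℕ → ℕ) (x : Q.El), Set.InjOn ρ (Q.legs x : Set ℕ) →
    toFun (Q.act ρ x) = P.act ρ (toFun x)
  map_comp : ∀ (a b : ℕ) (x y : Q.El), a ∈ Q.legs x → b ∈ Q.legs y →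
    Disjoint (Q.legs x) (Q.legs y) →
    toFun (Q.comp a b x y) = P.comp a b (toFun x) (toFun y)
  map_xi : ∀ (a b : ℕ) (x : Q.El), a ∈ Q.legs x → b ∈ Q.legs x → a ≠ b →
    toFun (Q.xi a b x) = P.xi a b (toFun x)

/-- A list of blocks `L = [C₁, …, C_b]` is a valid presentation of an element
`{⟨C₁⟩, …, ⟨C_b⟩}` of `QO` iff there is at least one block, the blocks are
nonempty and they are duplicate-free and pairwise disjoint. -/
def QOValid (L : List (List ℕ)) : Prop :=
  L ≠ [] ∧ L.flatten.Nodup ∧ ∀ l ∈ L, l ≠ []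

/-- Two lists of blocks present the same element of `QO` iff one can be taken
to the other by permuting the blocks and rotating each block. -/
def QOEquiv (L L' : List (List ℕ)) : Prop :=
  ∃ L'' : List (List ℕ), L.Perm L'' ∧ List.Forall₂ (· ~r ·) L'' L'

/-- The modular operad `QO` of homeomorphism classes of 2D compact surfaces
with marked points on the boundary: a modular operad `Q` together with a
presentation `ofBlocks L g` of its elements, `ofBlocks [C₁, …, C_b] g` being the symbol
`{⟨C₁⟩, …, ⟨C_b⟩}^g` of geometric genus `g` and operadic genus
`G = 2g + b - 1`, with the relabeling action, composition (gluing two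
marked points on boundaries of two different surfaces) and contraction
(gluing two marked points of the same surface, either on the same boundary
component or on two different ones) given by the explicit formulas below.
The canonical inclusion `ι : Ass → QO` sends `⟨C⟩` to `ofBlocks [C] 0`. -/
structure QOperad where
  Q : ModularOperad
  ofBlocks : List (List ℕ) → ℕ → Q.El
  legs_mk : ∀ (L : List (List ℕ)) (g : ℕ), QOValid L →
    Q.legs (ofBlocks L g) = L.flatten.toFinset
  gen_mk : ∀ (L : List (List ℕ)) (g : ℕ), QOValid L →
    Q.gen (ofBlocks L g) = 2 * g + L.length - 1
  mk_equiv : ∀ (L L' : List (List ℕ)) (g : ℕ), QOValid L → QOEquiv L L' →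
    ofBlocks L g = ofBlocks L' g
  mk_inj : ∀ (L L' : List (List ℕ)) (g g' : ℕ), QOValid L → QOValid L' →
    ofBlocks L g = ofBlocks L' g' → g = g' ∧ QOEquiv L L'
  mk_surj : ∀ x : Q.El, ∃ (L : List (List ℕ)) (g : ℕ), QOValid L ∧ x = ofBlocks L g
  act_mk : ∀ (ρ : ℕ → ℕ) (L : List (List ℕ)) (g : ℕ), QOValid L →
    Set.InjOn ρ (L.flatten.toFinset : Set ℕ) →
    Q.act ρ (ofBlocks L g) = ofBlocks (L.map (List.map ρ)) g
  comp_mk : ∀ (X Y : List ℕ) (R R' : List (List ℕ)) (a b g g' : ℕ),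
    QOValid ((X ++ [a]) :: R) → QOValid ((b :: Y) :: R') →
    (((X ++ [a]) :: R).flatten ++ ((b :: Y) :: R').flatten).Nodup →
    X ++ Y ≠ [] →
    Q.comp a b (ofBlocks ((X ++ [a]) :: R) g) (ofBlocks ((b :: Y) :: R') g') =
      ofBlocks ((X ++ Y) :: (R ++ R')) (g + g')
  xi_same_mk : ∀ (A B : List ℕ) (R : List (List ℕ)) (a b g : ℕ),
    QOValid ((a :: (A ++ b :: B)) :: R) → A ≠ [] → B ≠ [] →
    Q.xi a b (ofBlocks ((a :: (A ++ b :: B)) :: R) g) = ofBlocks (B :: A :: R) g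
  xi_diff_mk : ∀ (A B : List ℕ) (R : List (List ℕ)) (a b g : ℕ),
    QOValid ((a :: A) :: (b :: B) :: R) → B ++ A ≠ [] →
    Q.xi a b (ofBlocks ((a :: A) :: (b :: B) :: R) g) = ofBlocks ((B ++ A) :: R) (g + 1)

/-- `xiChain P [(a₁,b₁), …, (aₙ,bₙ)] x = ξ_{a₁b₁}(ξ_{a₂b₂}(⋯(ξ_{aₙbₙ} x)))`. -/
def xiChain (P : ModularOperad) (prs : List (ℕ × ℕ)) (x : P.El) : P.El :=
  prs.foldr (fun p y => P.xi p.1 p.2 y) x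

/-- The pairs `(e₁,e₂), (e₃,e₄), …, (e_{2k-1}, e_{2k})` of contracted labels
(`e` is used with 1-based indices). -/
def pairList (e : ℕ → ℕ) (k : ℕ) : List (ℕ × ℕ) :=
  (List.range k).map fun i => (e (2 * i + 1), e (2 * i + 2))

/-- The list of contracted pairs of a canonical expression with `b` boundary
components and geometric genus `g`:
`ξ_{12} ξ_{34} ⋯ ξ_{2b-3,2b-2} ξ_{2b-1,2b+1} ξ_{2b,2b+2} ⋯ ξ_{2b+4g-5,2b+4g-3} ξ_{2b+4g-4,2b+4g-2}`
(indices of the fresh labels `e`, 1-based). -/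
def canonPairs (b g : ℕ) (e : ℕ → ℕ) : List (ℕ × ℕ) :=
  ((List.range (b - 1)).map fun i => (e (2 * i + 1), e (2 * i + 2))) ++
    ((List.range g).map fun j =>
      [(e (2 * b - 1 + 4 * j), e (2 * b + 1 + 4 * j)),
       (e (2 * b + 4 * j), e (2 * b + 2 + 4 * j))]).flatten

/-- The list `C₁ e₁ C₂ e₂ e₃ C₃ e₄ ⋯ e_{2b-3} C_b e_{2b-2} e_{2b-1} e_{2b} ⋯ e_{4g+2b-2}`
representing the cyclic order `a_q` of a canonical expression (`e` is used
with 1-based indices). -/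
def canonList (L : List (List ℕ)) (g : ℕ) (e : ℕ → ℕ) : List ℕ :=
  match L with
  | [] => []
  | C₁ :: rest =>
      C₁ ++ (rest.zipIdx.map fun p => e (2 * p.2 + 1) :: (p.1 ++ [e (2 * p.2 + 2)])).flatten
        ++ ((List.range (4 * g)).map fun j => e (2 * rest.length + 1 + j))

/-- `e 1, …, e n` are pairwise distinct labels avoiding the finite set `S`. -/
def FreshLabels (e : ℕ → ℕ) (n : ℕ) (S : Finset ℕ) : Prop :=
  Set.InjOn e (Set.Icc 1 n) ∧ ∀ i ∈ Set.Icc 1 n, e i ∉ S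

/-! Contracting two legs `a`, `c` of the disk `⟨a U c V⟩` produces an annulus with boundary circles
`⟨U⟩` and `⟨V⟩`, which can be rotated independently of each other. Algebraically, cut the disk along
a segment from `U` to `V`: the exchange axiom trades the contraction along `a`, `c` for one along
the cut, and trading back along another cut turns both circles. In a handle the two contractions
commute, so the circles of either annulus may be turned; four turns carry `⟨a b c d M N⟩` to
`⟨a b c d N M⟩`. -/

open List

theorem isRotated_iff_exists_append {α : Type*} {l l' : List α} :
    l ~r l' ↔ ∃ A B, l = A ++ B ∧ l' = B ++ A := by
  constructor
  · intro h
    obtain ⟨n, hn, rfl⟩ := isRotated_iff_mod.mp h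
    exact ⟨l.take n, l.drop n, (take_append_drop n l).symm, rotate_eq_drop_append_take hn⟩
  · rintro ⟨A, B, rfl, rfl⟩
    exact isRotated_append

namespace AssMorphism

variable {P : ModularOperad} (f : AssMorphism P)

theorem f_eq_of_isRotated {l l' : List ℕ} (hl : l.Nodup) (h : l ~r l') : f.f l = f.f l' := by
  rcases eq_or_ne l [] with rfl | hne
  · rw [isRotated_nil_iff'.mp h]
  · exact f.f_rot l l' hne hl h

theorem mem_legs_f {l : List ℕ} (hl : l.Nodup) {x : ℕ} (hx : x ∈ l) : x ∈ P.legs (f.f l) := by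
  rwa [f.legs_f l (ne_nil_of_mem hx) hl, mem_toFinset]

theorem disjoint_legs_f {l l' : List ℕ} (h : (l ++ l').Nodup) (hl : l ≠ []) (hl' : l' ≠ []) :
    Disjoint (P.legs (f.f l)) (P.legs (f.f l')) := by
  rw [f.legs_f l hl h.of_append_left, f.legs_f l' hl' h.of_append_right,
    disjoint_toFinset_iff_disjoint]
  exact disjoint_of_nodup_append h

theorem comp_f_cons {a b : ℕ} {X Y : List ℕ} (h : (a :: X ++ b :: Y).Nodup) (hne : X ++ Y ≠ []) :
    P.comp a b (f.f (a :: X)) (f.f (b :: Y)) = f.f (X ++ Y) := by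
  rw [f.f_eq_of_isRotated h.of_append_left (isRotated_concat a X).symm]
  exact f.f_comp X Y a b (by grind) hne

theorem xi_f_exchange {a c p q : ℕ} {X₁ X₂ Y₁ Y₂ : List ℕ}
    (h : (q :: (X₁ ++ a :: X₂) ++ p :: (Y₁ ++ c :: Y₂)).Nodup) :
    P.xi a c (f.f ((X₁ ++ a :: X₂) ++ (Y₁ ++ c :: Y₂))) =
      P.xi q p (f.f ((X₂ ++ q :: X₁) ++ (Y₂ ++ p :: Y₁))) := by
  have hx := h.of_append_left
  have hy := h.of_append_right
  calc
    _ = P.xi a c (P.comp q p (f.f (q :: (X₁ ++ a :: X₂))) (f.f (p :: (Y₁ ++ c :: Y₂)))) := by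
      rw [f.comp_f_cons h (by simp)]
    _ = P.xi q p (P.comp a c (f.f (q :: (X₁ ++ a :: X₂))) (f.f (p :: (Y₁ ++ c :: Y₂)))) :=
      P.xi_comp_exchange a c q p _ _ (f.mem_legs_f hx (by simp)) (f.mem_legs_f hx (by simp))
        (f.mem_legs_f hy (by simp)) (f.mem_legs_f hy (by simp)) (by grind) (by grind)
        (f.disjoint_legs_f h (by simp) (by simp))
    _ = P.xi q p (P.comp a c (f.f (a :: (X₂ ++ q :: X₁))) (f.f (c :: (Y₂ ++ p :: Y₁)))) := by
      rw [f.f_eq_of_isRotated hx (isRotated_append (l := q :: X₁) (l' := a :: X₂)),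
        f.f_eq_of_isRotated hy (isRotated_append (l := p :: Y₁) (l' := c :: Y₂))]
      rfl
    _ = _ := by
      -- Here and below: with a `Nodup` hypothesis in context, `grind` does not finish.
      have hrot := h.perm (l' := a :: (X₂ ++ q :: X₁) ++ c :: (Y₂ ++ p :: Y₁))
        (by clear * -; grind)
      rw [f.comp_f_cons hrot (by simp)]

theorem xi_f_eq_xi_f_of_isRotated {a c p q : ℕ} {U U' V V' : List ℕ}
    (h : (p :: q :: a :: U ++ c :: V).Nodup) (hU : U ~r U') (hV : V ~r V') :
    P.xi a c (f.f (a :: U ++ c :: V)) = P.xi p q (f.f (p :: U' ++ q :: V')) := by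
  obtain ⟨A, B, rfl, rfl⟩ := isRotated_iff_exists_append.mp hU
  obtain ⟨C, D, rfl, rfl⟩ := isRotated_iff_exists_append.mp hV
  have hac : (a :: (A ++ B) ++ c :: (C ++ D)).Nodup := h.of_cons.of_cons
  have hpq : (A ++ q :: D ++ (C ++ p :: B)).Nodup :=
    h.perm (l' := a :: c :: (A ++ q :: D ++ (C ++ p :: B))) (by clear * -; grind)
      |>.of_cons.of_cons
  calc
    _ = P.xi a c (f.f ((D ++ a :: A) ++ (B ++ c :: C))) := by
      congr 1
      exact f.f_eq_of_isRotated hac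
        (isRotated_iff_exists_append.mpr ⟨a :: (A ++ B) ++ c :: C, D, by simp, by simp⟩)
    _ = P.xi q p (f.f ((A ++ q :: D) ++ (C ++ p :: B))) :=
      f.xi_f_exchange (h.perm (by clear * -; grind))
    _ = P.xi q p (f.f (p :: (B ++ A) ++ q :: (D ++ C))) := by
      congr 1
      exact f.f_eq_of_isRotated hpq
        (isRotated_iff_exists_append.mpr ⟨A ++ q :: D ++ C, p :: B, by simp, by simp⟩)
    _ = _ := P.xi_symm q p _

theorem xi_f_congr {a c : ℕ} {U U' V V' : List ℕ} (h : (a :: U ++ c :: V).Nodup)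
    (hU : U ~r U') (hV : V ~r V') :
    P.xi a c (f.f (a :: U ++ c :: V)) = P.xi a c (f.f (a :: U' ++ c :: V')) := by
  obtain ⟨q, hq⟩ := Infinite.exists_notMem_finset (a :: U ++ c :: V).toFinset
  obtain ⟨p, hp⟩ := Infinite.exists_notMem_finset (q :: a :: U ++ c :: V).toFinset
  rw [mem_toFinset] at hp hq
  have hpq : (p :: q :: a :: U ++ c :: V).Nodup := nodup_cons.mpr ⟨hp, nodup_cons.mpr ⟨hq, h⟩⟩
  have hpq' : (p :: q :: a :: U' ++ c :: V').Nodup :=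
    hpq.perm ((((hU.perm.cons a).append (hV.perm.cons c)).cons q).cons p)
  calc
    _ = P.xi p q (f.f (p :: U' ++ q :: V')) := f.xi_f_eq_xi_f_of_isRotated hpq hU hV
    _ = _ := (f.xi_f_eq_xi_f_of_isRotated hpq' (.refl _) (.refl _)).symm

theorem xi_xi_f_comm {a b c d : ℕ} {l : List ℕ} (hl : l.Nodup) (h : [a, b, c, d].Nodup)
    (hsub : [a, b, c, d] ⊆ l) :
    P.xi a c (P.xi b d (f.f l)) = P.xi b d (P.xi a c (f.f l)) := by
  have hleg {x : ℕ} (hx : x ∈ [a, b, c, d]) : x ∈ P.legs (f.f l) := f.mem_legs_f hl (hsub hx)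
  exact P.xi_xi a c b d _ (hleg (by simp)) (hleg (by simp)) (hleg (by simp)) (hleg (by simp))
    (by grind) (by grind) (by grind) (by grind) (by grind) (by grind)

theorem xi_xi_f_congr {a b c d : ℕ} {U U' V V' : List ℕ} (h : (a :: U ++ c :: V).Nodup)
    (hb : b ∈ U ++ V) (hd : d ∈ U ++ V) (hbd : b ≠ d) (hU : U ~r U') (hV : V ~r V') :
    P.xi a c (P.xi b d (f.f (a :: U ++ c :: V))) =
      P.xi a c (P.xi b d (f.f (a :: U' ++ c :: V'))) := by
  have hperm : a :: U ++ c :: V ~ a :: U' ++ c :: V' := (hU.perm.cons a).append (hV.perm.cons c)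
  have hlabels : [a, b, c, d].Nodup := by grind
  have hsub : [a, b, c, d] ⊆ a :: U ++ c :: V := by grind
  calc
    _ = P.xi b d (P.xi a c (f.f (a :: U ++ c :: V))) := f.xi_xi_f_comm h hlabels hsub
    _ = P.xi b d (P.xi a c (f.f (a :: U' ++ c :: V'))) := by rw [f.xi_f_congr h hU hV]
    _ = _ := (f.xi_xi_f_comm (h.perm hperm) hlabels (List.Subset.trans hsub hperm.subset)).symm

theorem xi_xi_f_spread_handle {a b c d : ℕ} {M N : List ℕ}
    (h : (a :: b :: c :: d :: (M ++ N)).Nodup) :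
    P.xi a c (P.xi b d (f.f (a :: b :: c :: d :: (M ++ N)))) =
      P.xi a c (P.xi b d (f.f (a :: M ++ b :: N ++ [c, d]))) :=
  calc
    _ = P.xi a c (P.xi b d (f.f (a :: [b] ++ c :: (N ++ d :: M)))) :=
      f.xi_xi_f_congr (U := [b]) (V := d :: M ++ N) h (by simp) (by simp) (by grind)
        (.refl _) isRotated_append
    _ = P.xi a c (P.xi b d (f.f (b :: ([c] ++ N) ++ d :: (M ++ [a])))) := by
      congr 2
      exact f.f_eq_of_isRotated (h.perm (by clear * -; grind))
        (isRotated_iff_exists_append.mpr ⟨[a], b :: c :: (N ++ d :: M), by simp, by simp⟩)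
    _ = P.xi a c (P.xi b d (f.f (b :: (N ++ [c]) ++ d :: ([a] ++ M)))) := by
      rw [f.xi_f_congr (h.perm (by clear * -; grind)) isRotated_append isRotated_append]
    _ = _ := by
      congr 2
      exact f.f_eq_of_isRotated (h.perm (by clear * -; grind))
        (isRotated_iff_exists_append.mpr ⟨b :: N ++ [c, d], a :: M, by simp, by simp⟩)

theorem xi_xi_f_collect_handle {a b c d : ℕ} {M N : List ℕ}
    (h : (a :: b :: c :: d :: (M ++ N)).Nodup) :
    P.xi a c (P.xi b d (f.f (a :: M ++ b :: N ++ [c, d]))) =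
      P.xi a c (P.xi b d (f.f (a :: b :: c :: d :: (N ++ M)))) :=
  calc
    _ = P.xi a c (P.xi b d (f.f (a :: ((M ++ [b]) ++ N) ++ c :: [d]))) := by simp
    _ = P.xi a c (P.xi b d (f.f (a :: (N ++ (M ++ [b])) ++ c :: [d]))) :=
      f.xi_xi_f_congr (h.perm (by clear * -; grind)) (by simp) (by simp) (by grind)
        isRotated_append (.refl _)
    _ = P.xi a c (P.xi b d (f.f (b :: [c] ++ d :: ([a] ++ (N ++ M))))) := by
      congr 2
      exact f.f_eq_of_isRotated (h.perm (by clear * -; grind))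
        (isRotated_iff_exists_append.mpr ⟨a :: (N ++ M), [b, c, d], by simp, by simp⟩)
    _ = P.xi a c (P.xi b d (f.f (b :: [c] ++ d :: ((N ++ M) ++ [a])))) := by
      rw [f.xi_f_congr (h.perm (by clear * -; grind)) (.refl _) isRotated_append]
    _ = _ := by
      congr 2
      exact f.f_eq_of_isRotated (h.perm (by clear * -; grind))
        (isRotated_iff_exists_append.mpr ⟨b :: c :: d :: (N ++ M), [a], by simp, by simp⟩)

theorem xi_xi_f_move_handle {a b c d : ℕ} {M N : List ℕ}
    (h : (a :: b :: c :: d :: (M ++ N)).Nodup) :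
    P.xi a c (P.xi b d (f.f (a :: b :: c :: d :: (M ++ N)))) =
      P.xi a c (P.xi b d (f.f (M ++ a :: b :: c :: d :: N))) := by
  rw [f.xi_xi_f_spread_handle h, f.xi_xi_f_collect_handle h]
  congr 2
  exact f.f_eq_of_isRotated (h.perm (by clear * -; grind))
    (isRotated_append (l := a :: b :: c :: d :: N) (l' := M))

end AssMorphism

/-- (Handle-moving lemma.)  For any composition `Ξ` of
contractions whose indices run over the entries of `M`, `N`,
`Ξ ξ_{ac} ξ_{bd} f⟨a b c d M N⟩ = Ξ ξ_{ac} ξ_{bd} f⟨M a b c d N⟩`: a handle —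
four consecutive labels `a b c d` with arcs `a–c` and `b–d` — can be moved
anywhere on the circle. -/
theorem handle_move (P : ModularOperad) (f : AssMorphism P)
    (M N : List ℕ) (a b c d : ℕ) (prs : List (ℕ × ℕ))
    (hnd : (a :: b :: c :: d :: (M ++ N)).Nodup)
    (hprs : ∀ p ∈ prs, p.1 ∈ M ++ N ∧ p.2 ∈ M ++ N) :
    xiChain P prs (P.xi a c (P.xi b d (f.f (a :: b :: c :: d :: (M ++ N))))) =
      xiChain P prs (P.xi a c (P.xi b d (f.f (M ++ a :: b :: c :: d :: N)))) :=
  congrArg (xiChain P prs) (f.xi_xi_f_move_handle hnd)
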